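/- Let m ∈ ℕ with m ≥ 1, let h : ℕ → ℕ be a polynomial with coefficients in ℕ and zero constant term, let a₁,…,a_m ∈ ℕ, let p₁,…,p_m be minimal idempotent ultrafilters on ℕ, and let A ∈ h̃(a₁·p₁ + ⋯ + a_m·p_m), where h̃ denotes the pushforward of ultrafilters along h. Then for every T ∈ 𝒫_f(ℙ) there exist functions α₁,…,α_m : 𝒫_f(ℕ^ℕ) → ℕ and H₁,…,H_m : 𝒫_f(ℕ^ℕ) → 𝒫_f(ℕ) such that (1) whenever F ⊊ G in 𝒫_f(ℕ^ℕ), max H_l(F) < min H_l(G) for every l ∈ {1,…,m}, and (2) when127ever G₁ ⊊ G₂ ⊊ ⋯ is an infinite strictly increasing chain in 𝒫_f(ℕ^ℕ), f_i ∈ G_i for each i ∈ ℕ, P₁,…,P_m ∈ T, and β₁ < ⋯ < β_m are in 𝒫_f(ℕ), then h(Σ_{l=1}^m a_l·(Σ_{i∈β_l}α_l(G_i) + P_l(Σ_{i∈β_l}Σ_{t∈H_l(G_i)}f_i(t)))) ∈ A. -/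

import Mathlib

/-!
The averaging input is a polynomial van der Waerden theorem along an idempotent `q`. In a minimal
system, colour focusing makes a family of polynomial maps recurrent along `q` as soon as the family
of its derivatives, from which one map of least degree is subtracted, is recurrent; this lowers the
weight of the family in the Dershowitz-Manna order (Bergelson's PET induction). Applied to a minimal
subsystem of the translation action on `βℤ`, recurrence produces ultrafilters all of whose members
contain configurations `a + P (∑ t ∈ H, f t)`. These ultrafilters form a two-sided ideal of `βℕ`,
and a minimal idempotent belongs to every such ideal.

For an idempotent `p` and `C ∈ p`, the blocks `α F, H F` are then chosen by recursion on `F`. Along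
a chain, a partial sum with values `a, s` satisfies `a + P s ∈ C⋆`, so the `y` with
`a + P s + y ∈ C⋆` form a member of `p`. As `y ↦ P (s + y) - P s` is again a polynomial without
constant term, a configuration inside that member prolongs the sum. For a linear combination
`a₁ • p₁ + ⋯ + aₘ • pₘ`, one inducts on `m`: since `β₁ < ⋯ < βₘ`, when the later blocks are chosen
only finitely many values of the first one have to be taken into account.
-/

namespace MultiCST

/-- The sum `p + q` of ultrafilters on ℕ: `A ∈ p + q` iff `{x : {y : x+y ∈ A} ∈ q} ∈ p`. -/
def uAdd (p q : Ultrafilter ℕ) : Ultrafilter ℕ :=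
  p.bind fun x => q.map fun y => x + y

/-- `A ⊆ ℕ` is a J-set. -/
def IsJSet (A : Set ℕ) : Prop :=
  ∀ F : Finset (ℕ → ℕ), F.Nonempty →
    ∃ (a : ℕ) (β : Finset ℕ), β.Nonempty ∧ ∀ f ∈ F, a + ∑ t ∈ β, f t ∈ A

/-- `p ∈ 𝒥`: every member of `p` is a J-set. -/
def MemJ (p : Ultrafilter ℕ) : Prop := ∀ A : Set ℕ, A ∈ p → IsJSet A

/-- `p` is an idempotent ultrafilter. -/
def IdempotentUF (p : Ultrafilter ℕ) : Prop := uAdd p p = p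

/-- `p` is a minimal idempotent ultrafilter. -/
def IsMinimalIdempotent (p : Ultrafilter ℕ) : Prop :=
  IdempotentUF p ∧
    ∀ q : Ultrafilter ℕ, IdempotentUF q → uAdd q p = q → uAdd p q = q → q = p

/-- Tensor product `⊗_{i=1}^m p_i` of ultrafilters on ℕ, as an ultrafilter on `Fin m → ℕ`. -/
def tensor : ∀ m : ℕ, (Fin m → Ultrafilter ℕ) → Ultrafilter (Fin m → ℕ)
  | 0, _ => pure fun i => i.elim0
  | m + 1, p =>
      (p 0).bind fun x => (tensor m fun i => p i.succ).map fun v => Fin.cons x v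

/-- `f : ℕ → ℕ` is (given by) a polynomial with coefficients in ℕ and zero constant term. -/
def IsPolyZeroConst (f : ℕ → ℕ) : Prop :=
  ∃ P : Polynomial ℕ, P.coeff 0 = 0 ∧ ∀ x, f x = P.eval x

/-- The linear combination `a₁·p₁ + a₂·p₂ + ⋯ + a_m·p_m` of ultrafilters on ℕ. -/
def linComb : ∀ m : ℕ, (Fin m → ℕ) → (Fin m → Ultrafilter ℕ) → Ultrafilter ℕ
  | 0, _, _ => pure 0
  | m + 1, a, p =>
      uAdd ((p 0).map fun x => a 0 * x)
        (linComb m (fun i => a i.succ) fun i => p i.succ)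

attribute [local instance] Ultrafilter.add Ultrafilter.addSemigroup

section Idempotent

variable {M : Type*} [AddSemigroup M] {p : Ultrafilter M} {A : Set M} {x : M}

/-- The set `A⋆` of the `x ∈ A` for which the translate `-x + A` is still `p`-large. -/
def starSet (p : Ultrafilter M) (A : Set M) : Set M := {x ∈ A | ∀ᶠ y in p, x + y ∈ A}

theorem starSet_mem (hp : p + p = p) (hA : A ∈ p) : starSet p A ∈ p :=
  Filter.inter_mem hA ((Ultrafilter.eventually_add p p (· ∈ A)).1 (hp.symm ▸ hA))

theorem eventually_add_mem_starSet (hp : p + p = p) (hx : x ∈ starSet p A) :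
    ∀ᶠ y in p, x + y ∈ starSet p A := by
  filter_upwards [starSet_mem hp hx.2] with y hy
  refine ⟨hy.1, ?_⟩
  simpa only [Set.mem_ofPred_eq, add_assoc] using hy.2

theorem mem_of_minimal_idempotent {S : Type*} [AddSemigroup S] [TopologicalSpace S]
    [CompactSpace S] [T2Space S] (hcont : ∀ s : S, Continuous (· + s)) {e : S} (he : e + e = e)
    (hmin : ∀ q : S, q + q = q → q + e = q → e + q = q → q = e) {I : Set S} (hI : I.Nonempty)
    (hleft : ∀ s, ∀ y ∈ I, s + y ∈ I) (hright : ∀ y ∈ I, ∀ s, y + s ∈ I) : e ∈ I := by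
  obtain ⟨x, hx⟩ := hI
  obtain ⟨d, ⟨y, rfl⟩, hd⟩ := exists_idempotent_in_compact_add_subsemigroup hcont
    (Set.range (· + (x + e))) ⟨_, x, rfl⟩ (isCompact_range (hcont _)) <| by
      rintro _ ⟨y, rfl⟩ _ ⟨z, rfl⟩
      exact ⟨y + (x + e) + z, by simp only [add_assoc]⟩
  set d := y + (x + e) with hdef
  -- `e + d` is an idempotent below `e`, so `e = e + d` by minimality.
  have hde : d + e = d := by simp only [hdef, add_assoc, he]
  have hed : e + d = e :=
    hmin (e + d) (by rw [add_assoc, ← add_assoc d e d, hde, hd]) (by rw [add_assoc, hde])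
      (by rw [← add_assoc, he])
  rw [← hed]
  exact hleft e d (hleft y _ (hright x hx e))

end Idempotent

section FiniteSums

variable {M : Type*} [AddCommMonoid M]

theorem exists_finset_sum_eq_of_mem_FS {a : Stream' M} {m : M} (hm : m ∈ Hindman.FS a) :
    ∃ H : Finset ℕ, H.Nonempty ∧ ∑ t ∈ H, a.get t = m := by
  induction hm with
  | head' a => exact ⟨{0}, Finset.singleton_nonempty 0, Finset.sum_singleton _ _⟩
  | tail' a m _ ih =>
    obtain ⟨H, hH, rfl⟩ := ih
    exact ⟨H.map (addRightEmbedding 1), hH.map, Finset.sum_map _ _ _⟩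
  | cons' a m _ ih =>
    obtain ⟨H, -, rfl⟩ := ih
    refine ⟨insert 0 (H.map (addRightEmbedding 1)), Finset.insert_nonempty _ _, ?_⟩
    rw [Finset.sum_insert (by simp), Finset.sum_map]
    rfl

theorem exists_idempotent_eventually_sum (a : ℕ → M) :
    ∃ q : Ultrafilter M, q + q = q ∧
      ∀ᶠ w in q, ∃ H : Finset ℕ, H.Nonempty ∧ ∑ t ∈ H, a t = w := by
  obtain ⟨q, hq, hFS⟩ := Hindman.exists_idempotent_ultrafilter_le_FS (a : Stream' M)
  exact ⟨q, hq, hFS.mono fun _ => exists_finset_sum_eq_of_mem_FS⟩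

end FiniteSums

section PolyMap

variable {G Z Z' : Type*} [AddCommGroup G] [AddCommGroup Z] [AddCommGroup Z']

/-- Polynomial maps of degree at most `d` between abelian groups that vanish at `0`, defined by
recursion on the degree: `w ↦ P (u + w) - P u - P w` must have degree at most `d - 1`. -/
def IsPolyMap : ℕ → (G → Z) → Prop
  | 0, P => P = 0
  | d + 1, P => P 0 = 0 ∧ ∀ u, IsPolyMap d fun w => P (u + w) - P u - P w

namespace IsPolyMap

variable {d e : ℕ} {P Q : G → Z}

theorem zero (d : ℕ) : IsPolyMap d (0 : G → Z) := by
  induction d with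
  | zero => rfl
  | succ d ih => exact ⟨rfl, fun u => by simpa [Pi.zero_def] using ih⟩

theorem map_zero (hP : IsPolyMap d P) : P 0 = 0 := by
  cases d with
  | zero => exact congrFun hP 0
  | succ d => exact hP.1

theorem succ (hP : IsPolyMap d P) : IsPolyMap (d + 1) P := by
  induction d generalizing P with
  | zero => exact hP ▸ zero 1
  | succ d ih => exact ⟨hP.1, fun u => ih (hP.2 u)⟩

theorem mono (hP : IsPolyMap d P) (hde : d ≤ e) : IsPolyMap e P :=
  Nat.le_induction hP (fun _ _ => succ) e hde

theorem add (hP : IsPolyMap d P) (hQ : IsPolyMap d Q) : IsPolyMap d (P + Q) := by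
  induction d generalizing P Q with
  | zero => rw [show P = 0 from hP, show Q = 0 from hQ, add_zero]; rfl
  | succ d ih =>
    refine ⟨by simp [hP.1, hQ.1], fun u => ?_⟩
    convert! ih (hP.2 u) (hQ.2 u) using 2
    simp only [Pi.add_apply]
    abel

theorem map (hP : IsPolyMap d P) (ψ : Z →+ Z') : IsPolyMap d fun w => ψ (P w) := by
  induction d generalizing P with
  | zero => funext w; simp [show P = 0 from hP]
  | succ d ih =>
    refine ⟨by simp [hP.1], fun u => ?_⟩
    simpa using ih (hP.2 u)

theorem sub (hP : IsPolyMap d P) (hQ : IsPolyMap d Q) : IsPolyMap d (P - Q) :=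
  sub_eq_add_neg P Q ▸ hP.add (hQ.map (-AddMonoidHom.id Z))

theorem sum {ι : Type*} {s : Finset ι} {f : ι → G → Z} (hf : ∀ i ∈ s, IsPolyMap d (f i)) :
    IsPolyMap d (∑ i ∈ s, f i) :=
  Finset.sum_induction f (IsPolyMap d) (fun _ _ => add) (zero d) hf

end IsPolyMap

variable {R : Type*} [CommRing R]

theorem isPolyMap_addMonoidHom (φ : G →+ Z) : IsPolyMap 1 φ :=
  ⟨map_zero φ, fun u => funext fun w => by simp⟩

theorem IsPolyMap.addMonoidHom_mul {d : ℕ} {P : G → R} (hP : IsPolyMap d P) (φ : G →+ R) :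
    IsPolyMap (d + 1) fun w => φ w * P w := by
  induction d generalizing P with
  | zero => rw [show P = 0 from hP]; simpa [Pi.zero_def] using IsPolyMap.zero (G := G) (Z := R) 1
  | succ d ih =>
    refine ⟨by simp, fun u => ?_⟩
    have hsum := (((ih (hP.2 u)).add ((hP.2 u).map (AddMonoidHom.mulLeft (φ u))).succ).add
      (hP.map (AddMonoidHom.mulLeft (φ u)))).add
      (((isPolyMap_addMonoidHom φ).map (AddMonoidHom.mulLeft (P u))).mono (Nat.succ_pos d))
    convert! hsum using 2
    simp only [Pi.add_apply, AddMonoidHom.coe_mulLeft, map_add]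
    ring

theorem isPolyMap_addMonoidHom_pow (φ : G →+ R) (n : ℕ) :
    IsPolyMap (n + 1) fun w => φ w ^ (n + 1) := by
  induction n with
  | zero => simpa using isPolyMap_addMonoidHom φ
  | succ n ih => simpa only [pow_succ'] using ih.addMonoidHom_mul φ

theorem isPolyMap_eval (φ : G →+ R) {P : Polynomial R} (hP : P.coeff 0 = 0) :
    IsPolyMap P.natDegree fun w => P.eval (φ w) := by
  have heval : (fun w => P.eval (φ w)) =
      ∑ n ∈ Finset.range P.natDegree, fun w => P.coeff (n + 1) * φ w ^ (n + 1) := by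
    funext w
    rw [Polynomial.eval_eq_sum_range, Finset.sum_range_succ', Finset.sum_apply, hP, zero_mul,
      add_zero]
  rw [heval]
  exact IsPolyMap.sum fun n hn => ((isPolyMap_addMonoidHom_pow φ n).map
    (AddMonoidHom.mulLeft _)).mono (Finset.mem_range.1 hn)

end PolyMap

section Recurrence

theorem exists_finset_vadd_mem {M X : Type*} [AddMonoid M] [AddAction M X] [TopologicalSpace X]
    [ContinuousConstVAdd M X] [CompactSpace X] [AddAction.IsMinimal M X] {U : Set X}
    (hU : IsOpen U) (hne : U.Nonempty) : ∃ E : Finset M, ∀ x : X, ∃ t ∈ E, t +ᵥ x ∈ U := by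
  obtain ⟨E, hE⟩ := isCompact_univ.elim_finite_subcover (fun t : M => (t +ᵥ ·) ⁻¹' U)
    (fun t => hU.preimage (continuous_const_vadd t)) (hU.iUnion_preimage_vadd M hne).ge
  exact ⟨E, fun x => by simpa using hE (Set.mem_univ x)⟩

variable {G Z X : Type*} [AddCommGroup Z] [TopologicalSpace X] [AddAction Z X]

variable (X) in
/-- The family `Ps` is recurrent along `q`: for `q`-most `w`, each nonempty open set contains a
point that all the translations by `P w`, `P ∈ Ps`, simultaneously bring back to it. -/
def IsRecurrent (q : Ultrafilter G) (Ps : Finset (G → Z)) : Prop :=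
  ∀ U : Set X, IsOpen U → U.Nonempty → ∀ᶠ w in q, ∃ x ∈ U, ∀ P ∈ Ps, P w +ᵥ x ∈ U

variable {q : Ultrafilter G} {Ps : Finset (G → Z)}

theorem IsRecurrent.of_erase_zero [DecidableEq (G → Z)] (h : IsRecurrent X q (Ps.erase 0)) :
    IsRecurrent X q Ps := fun U hU hne => by
  filter_upwards [h U hU hne] with w ⟨x, hx, hP⟩
  refine ⟨x, hx, fun P hPs => ?_⟩
  by_cases hP0 : P = 0
  · simpa [hP0] using hx
  · exact hP P (Finset.mem_erase.2 ⟨hP0, hPs⟩)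

variable [AddCommGroup G]

/-- Colour focusing of the nonempty open set `D` on `U` by the translations `t ∈ τ`: every
`x ∈ D` satisfies `t + P (u t) + x ∈ U`, and each `u t` can be prolonged by `q`-most `w` to an
element of `B`, robustly under further prolongations. -/
def IsFocused (q : Ultrafilter G) (Ps : Finset (G → Z)) (U : Set X) (B : Set G) (τ : Finset Z) :
    Prop :=
  ∃ (u : Z → G) (D : Set X), IsOpen D ∧ D.Nonempty ∧ ∀ t ∈ τ,
    (∀ᶠ w in q, u t + w ∈ starSet q B) ∧ ∀ x ∈ D, ∀ P ∈ Ps, t +ᵥ (P (u t) +ᵥ x) ∈ U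

variable [ContinuousConstVAdd Z X]

theorem IsFocused.exists_insert [DecidableEq Z] (hq : q + q = q) (h0 : ∀ P ∈ Ps, P 0 = 0)
    (hdiff : ∀ (A : Finset G) (D : Set X), IsOpen D → D.Nonempty →
      ∀ᶠ w in q, ∃ x, ∀ P ∈ Ps, ∀ u ∈ A, (P (u + w) - P u) +ᵥ x ∈ D)
    {U : Set X} (hU : IsOpen U) {E : Finset Z} (hE : ∀ x : X, ∃ t ∈ E, t +ᵥ x ∈ U)
    {B : Set G} (hB : B ∈ q) (hBU : ∀ w ∈ B, ¬ ∃ x ∈ U, ∀ P ∈ Ps, P w +ᵥ x ∈ U)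
    {τ : Finset Z} (hτ : IsFocused q Ps U B τ) :
    ∃ t ∈ E, t ∉ τ ∧ IsFocused q Ps U B (insert t τ) := by
  classical
  obtain ⟨u, D, hD, hDne, hτD⟩ := hτ
  have hprolong : ∀ᶠ w in q, ∀ t ∈ τ, u t + w ∈ starSet q B :=
    (Filter.eventually_all_finset τ).2 fun t ht => (hτD t ht).1
  obtain ⟨w, hw, x, hx⟩ := (hprolong.and (hdiff (τ.image u) D hD hDne)).exists
  have hfocus (y : X) (hy : ∀ P ∈ Ps, ∀ t ∈ τ, (P (u t + w) - P (u t)) +ᵥ y ∈ D) :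
      ∀ t ∈ τ, ∀ P ∈ Ps, t +ᵥ (P (u t + w) +ᵥ y) ∈ U := fun t ht P hP => by
    simpa only [vadd_vadd, add_sub_cancel] using (hτD t ht).2 _ (hy P hP t ht) P hP
  replace hx : ∀ P ∈ Ps, ∀ t ∈ τ, (P (u t + w) - P (u t)) +ᵥ x ∈ D :=
    fun P hP t ht => hx P hP _ (Finset.mem_image_of_mem u ht)
  obtain ⟨s, hsE, hs⟩ := hE x
  have hsτ : s ∉ τ := fun hsτ => hBU _ (hw s hsτ).1
    ⟨s +ᵥ x, hs, fun P hP => vadd_comm (P (u s + w)) s x ▸ hfocus x hx s hsτ P hP⟩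
  let D' : Set X :=
    {y | (∀ P ∈ Ps, ∀ t ∈ τ, (P (u t + w) - P (u t)) +ᵥ y ∈ D) ∧ s +ᵥ y ∈ U}
  have hD' : IsOpen D' := by
    simp only [D', Set.ofPred_and, Set.ofPred_forall]
    exact (isOpen_biInter_finset fun P _ => isOpen_biInter_finset fun t _ =>
      hD.preimage (continuous_const_vadd _)).inter (hU.preimage (continuous_const_vadd s))
  refine ⟨s, hsE, hsτ, Function.update (fun t => u t + w) s 0, D', hD', ⟨x, hx, hs⟩, ?_⟩
  intro t ht
  obtain rfl | ht := Finset.mem_insert.1 ht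
  · simp only [Function.update_self, zero_add]
    exact ⟨starSet_mem hq hB, fun y hy P hP => by simpa [h0 P hP] using hy.2⟩
  · rw [Function.update_of_ne (ne_of_mem_of_not_mem ht hsτ)]
    exact ⟨eventually_add_mem_starSet hq (hw t ht), fun y hy => hfocus y hy.1 t ht⟩

variable [CompactSpace X] [AddAction.IsMinimal Z X]

theorem isRecurrent_of_differences (hq : q + q = q) (h0 : ∀ P ∈ Ps, P 0 = 0)
    (hdiff : ∀ (A : Finset G) (D : Set X), IsOpen D → D.Nonempty →
      ∀ᶠ w in q, ∃ x, ∀ P ∈ Ps, ∀ u ∈ A, (P (u + w) - P u) +ᵥ x ∈ D) :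
    IsRecurrent X q Ps := fun U hU hne => by
  classical
  obtain ⟨E, hE⟩ := exists_finset_vadd_mem (M := Z) hU hne
  by_contra hrec
  let B : Set G := {w | ¬ ∃ x ∈ U, ∀ P ∈ Ps, P w +ᵥ x ∈ U}
  have hB : B ∈ q := Ultrafilter.eventually_not.2 hrec
  have hempty : ∅ ∈ E.powerset.filter (IsFocused q Ps U B) :=
    Finset.mem_filter.2 ⟨Finset.empty_mem_powerset E, 0, U, hU, hne, by simp⟩
  obtain ⟨τ, hτ, hmax⟩ := Finset.exists_max_image _ Finset.card ⟨∅, hempty⟩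
  obtain ⟨hτE, hτ⟩ := Finset.mem_filter.1 hτ
  obtain ⟨t, htE, htτ, ht⟩ := hτ.exists_insert hq h0 hdiff hU hE hB fun _ hw => hw
  have hcard := hmax (insert t τ) <| Finset.mem_filter.2
    ⟨Finset.mem_powerset.2 (Finset.insert_subset htE (Finset.mem_powerset.1 hτE)), ht⟩
  rw [Finset.card_insert_of_notMem htτ] at hcard
  omega

end Recurrence

section PolynomialExhaustion

variable {G Z X : Type*} [AddCommGroup G] [AddCommGroup Z]

/-- `M` lists pairs `(Q, d)` with `Q` of degree at most `d + 1`, and each nonzero element of `Ps`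
agrees up to degree `d` with the map `Q` of one of them. The multiset of the `d` is the weight in
the sense of Bergelson's PET induction. -/
structure IsCoveredBy (Ps : Finset (G → Z)) (M : Multiset ((G → Z) × ℕ)) : Prop where
  isPolyMap : ∀ c ∈ M, IsPolyMap (c.2 + 1) c.1
  exists_sub : ∀ P ∈ Ps, P ≠ 0 → ∃ c ∈ M, IsPolyMap c.2 (P - c.1)

open Classical in
/-- The family of the `w ↦ P (u + w) - P u - Q w` for `P ∈ Ps` and `u ∈ A`. -/
noncomputable def derivedFamily (Ps : Finset (G → Z)) (Q : G → Z) (A : Finset G) :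
    Finset (G → Z) :=
  (Ps ×ˢ A).image fun z w => z.1 (z.2 + w) - z.1 z.2 - Q w

variable {Ps : Finset (G → Z)} {M : Multiset ((G → Z) × ℕ)} {Q P : G → Z} {d : ℕ}

theorem IsCoveredBy.mono {Ps' : Finset (G → Z)} (h : IsCoveredBy Ps M) (hPs : Ps' ⊆ Ps) :
    IsCoveredBy Ps' M :=
  ⟨h.isPolyMap, fun P hP => h.exists_sub P (hPs hP)⟩

theorem IsCoveredBy.map_zero (h : IsCoveredBy Ps M) (hP : P ∈ Ps) : P 0 = 0 := by
  by_cases hP0 : P = 0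
  · rw [hP0, Pi.zero_apply]
  · obtain ⟨c, hc, hPc⟩ := h.exists_sub P hP hP0
    simpa [(h.isPolyMap c hc).map_zero] using hPc.map_zero

theorem IsPolyMap.derived_sub {Q' : G → Z} (hQ' : IsPolyMap (d + 1) Q')
    (hPQ' : IsPolyMap d (P - Q')) (u : G) :
    IsPolyMap d ((fun w => P (u + w) - P u - Q w) - (Q' - Q)) := by
  have hP : IsPolyMap (d + 1) P := by simpa using hPQ'.succ.add hQ'
  convert! hPQ'.add (hP.2 u) using 1
  funext w
  simp only [Pi.sub_apply, Pi.add_apply]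
  abel

theorem IsCoveredBy.exists_derivedFamily {c : (G → Z) × ℕ} (h : IsCoveredBy Ps M) (hc : c ∈ M)
    (hmin : ∀ c' ∈ M, c.2 ≤ c'.2) (h0 : 0 ∉ Ps) (A : Finset G) :
    ∃ M', Multiset.IsDershowitzMannaLT (M'.map Prod.snd) (M.map Prod.snd) ∧
      IsCoveredBy (derivedFamily Ps c.1 A) M' := by
  classical
  obtain ⟨M₀, rfl⟩ := Multiset.exists_cons_of_mem hc
  let lower : Finset ((G → Z) × ℕ) :=
    {z ∈ derivedFamily Ps c.1 A ×ˢ Finset.range c.2 | IsPolyMap (z.2 + 1) z.1}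
  refine ⟨M₀.map (fun c' => (c'.1 - c.1, c'.2)) + lower.val,
    ⟨M₀.map Prod.snd, lower.val.map Prod.snd, {c.2}, by simp, by simp, ?_, ?_⟩, ?_, ?_⟩
  · simp [add_comm]
  · simp +contextual [lower]
  · intro e he
    obtain he | he := Multiset.mem_add.1 he
    · obtain ⟨c', hc', rfl⟩ := Multiset.mem_map.1 he
      have hc'M : c' ∈ c ::ₘ M₀ := Multiset.mem_cons_of_mem hc'
      exact (h.isPolyMap c' hc'M).sub ((h.isPolyMap c hc).mono (by grind))
    · exact (Finset.mem_filter.1 he).2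
  · intro R hR hR0
    obtain ⟨⟨P, u⟩, hPu, rfl⟩ := Finset.mem_image.1 hR
    obtain ⟨hP, -⟩ := Finset.mem_product.1 hPu
    obtain ⟨c', hc', hPc'⟩ := h.exists_sub P hP (ne_of_mem_of_not_mem hP h0)
    have hsub := (h.isPolyMap c' hc').derived_sub (Q := c.1) hPc' u
    obtain rfl | hc'₀ := Multiset.mem_cons.1 hc'
    · rw [sub_self, sub_zero] at hsub
      obtain ⟨d, hd⟩ : ∃ d, c'.2 = d + 1 :=
        Nat.exists_eq_succ_of_ne_zero fun hd => hR0 (by rwa [hd] at hsub)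
      refine ⟨(_, d), Multiset.mem_add.2 (.inr (Finset.mem_filter.2
        ⟨Finset.mk_mem_product hR (by simp [hd]), hd ▸ hsub⟩)), ?_⟩
      simpa using IsPolyMap.zero d
    · exact ⟨_, Multiset.mem_add.2 (.inl (Multiset.mem_map_of_mem _ hc'₀)), hsub⟩

variable [TopologicalSpace X] [CompactSpace X] [AddAction Z X] [ContinuousConstVAdd Z X]
  [AddAction.IsMinimal Z X] {q : Ultrafilter G}

theorem IsCoveredBy.isRecurrent (hq : q + q = q) (h : IsCoveredBy Ps M) :
    IsRecurrent X q Ps := by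
  classical
  have hwf := InvImage.wf (Multiset.map Prod.snd : Multiset ((G → Z) × ℕ) → Multiset ℕ)
    (Multiset.wellFounded_isDershowitzMannaLT (α := ℕ))
  induction M using hwf.induction generalizing Ps with | _ M ih
  refine IsRecurrent.of_erase_zero ?_
  replace h : IsCoveredBy (Ps.erase 0) M := h.mono (Finset.erase_subset 0 Ps)
  refine isRecurrent_of_differences hq (fun P => h.map_zero) fun A D hD hne => ?_
  obtain rfl | ⟨c₀, hc₀⟩ := M.empty_or_exists_mem
  · obtain ⟨x, -⟩ := hne
    refine .of_forall fun w => ⟨x, fun P hP => ?_⟩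
    simpa using h.exists_sub P hP (Finset.ne_of_mem_erase hP)
  obtain ⟨c, hc, hmin⟩ := M.toFinset.exists_min_image Prod.snd ⟨c₀, Multiset.mem_toFinset.2 hc₀⟩
  simp only [Multiset.mem_toFinset] at hc hmin
  obtain ⟨M', hM', hcov⟩ := h.exists_derivedFamily hc hmin (Finset.notMem_erase 0 Ps) A
  filter_upwards [ih M' hM' hcov D hD hne] with w ⟨x, _, hx⟩
  refine ⟨-c.1 w +ᵥ x, fun P hP u hu => ?_⟩
  simpa only [vadd_vadd, ← sub_eq_add_neg] using
    hx _ (Finset.mem_image_of_mem _ (Finset.mk_mem_product hP hu))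

theorem isRecurrent_of_isPolyMap (hq : q + q = q) (hPs : ∀ P ∈ Ps, ∃ d, IsPolyMap d P) :
    IsRecurrent X q Ps := by
  choose! d hd using hPs
  refine IsCoveredBy.isRecurrent (M := Ps.val.map fun P => (P, d P)) hq ⟨?_, fun P hP _ => ?_⟩
  · simpa using fun P hP => (hd P hP).succ
  · exact ⟨(P, d P), Multiset.mem_map_of_mem _ hP, by simpa using IsPolyMap.zero (d P)⟩

end PolynomialExhaustion

section MinimalSystem

variable {M X : Type*} [AddMonoid M] [AddAction M X] [TopologicalSpace X]
  [ContinuousConstVAdd M X]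

instance continuousConstVAdd_subAddAction (L : SubAddAction M X) : ContinuousConstVAdd M L :=
  ⟨fun c => ((continuous_const_vadd c).comp continuous_subtype_val).subtype_mk _⟩

theorem exists_isMinimal_subAddAction [CompactSpace X] {K : Set X} (hK : IsClosed K)
    (hne : K.Nonempty) (hinv : ∀ c : M, ∀ x ∈ K, c +ᵥ x ∈ K) :
    ∃ L : SubAddAction M X, ↑L ⊆ K ∧ IsClosed (L : Set X) ∧ (L : Set X).Nonempty ∧
      AddAction.IsMinimal M L := by
  let S : Set (Set X) := {N | IsClosed N ∧ N.Nonempty ∧ ∀ c : M, ∀ x ∈ N, c +ᵥ x ∈ N}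
  have hchain (C : Set (Set X)) (hCS : C ⊆ S) (hC : IsChain (· ⊆ ·) C) (hCne : C.Nonempty) :
      ∃ N ∈ S, ∀ N' ∈ C, N ⊆ N' := by
    have : Nonempty C := hCne.to_subtype
    have hdir : DirectedOn (· ⊇ ·) C := fun N hN N' hN' =>
      (hC.total hN hN').elim (⟨N, hN, subset_rfl, ·⟩) (⟨N', hN', ·, subset_rfl⟩)
    refine ⟨⋂₀ C, ⟨isClosed_sInter fun N hN => (hCS hN).1, ?_, fun c x hx N hN =>
      (hCS hN).2.2 c x (hx N hN)⟩, fun N hN => Set.sInter_subset_of_mem hN⟩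
    exact IsCompact.nonempty_sInter_of_directed_nonempty_isCompact_isClosed hdir
      (fun N hN => (hCS hN).2.1) (fun N hN => (hCS hN).1.isCompact) fun N hN => (hCS hN).1
  obtain ⟨L, hLK, hL⟩ := zorn_superset_nonempty S hchain K ⟨hK, hne, hinv⟩
  refine ⟨⟨L, fun c _ => hL.prop.2.2 c _⟩, hLK, hL.prop.1, hL.prop.2.1, ⟨fun x => ?_⟩⟩
  have horbit : closure (AddAction.orbit M (x : X)) ⊆ L :=
    closure_minimal (by rintro _ ⟨c, rfl⟩; exact hL.prop.2.2 c _ x.2) hL.prop.1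
  rw [Subtype.dense_iff, SubAddAction.val_image_orbit]
  refine hL.le_of_le ⟨isClosed_closure, (AddAction.nonempty_orbit _).closure, ?_⟩ horbit
  exact fun c y hy => vadd_closure_orbit_subset c _ (Set.vadd_mem_vadd_set hy)

end MinimalSystem

section TranslatedUltrafilters

variable {G M Z : Type*}

/-- The action of `M` on ultrafilters by translation. -/
@[reducible] def ultrafilterAddAction [AddMonoid M] : AddAction M (Ultrafilter M) where
  vadd c r := r.map (c + ·)
  zero_vadd r := by
    change r.map (0 + ·) = r
    simp only [zero_add, Ultrafilter.map_id']
  add_vadd c c' r := by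
    change r.map (c + c' + ·) = (r.map (c' + ·)).map (c + ·)
    simp only [Ultrafilter.map_map, Function.comp_def, add_assoc]

attribute [local instance] ultrafilterAddAction

theorem continuousConstVAdd_ultrafilter [AddMonoid M] : ContinuousConstVAdd M (Ultrafilter M) :=
  ⟨fun c => ultrafilterBasis_is_basis.continuous_iff.2 <| by
    rintro _ ⟨S, rfl⟩
    exact ultrafilter_isOpen_basic ((c + ·) ⁻¹' S)⟩

variable [AddCommGroup G] [AddCommGroup Z] {q : Ultrafilter G}

theorem exists_ultrafilter_eventually_add_mem (hq : q + q = q) {K : Set (Ultrafilter Z)}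
    (hK : IsClosed K) (hne : K.Nonempty) (hinv : ∀ c : Z, ∀ r ∈ K, r.map (c + ·) ∈ K)
    {Ps : Finset (G → Z)} (hPs : ∀ P ∈ Ps, ∃ d, IsPolyMap d P) :
    ∃ r ∈ K, ∀ S ∈ r, ∀ᶠ w in q, ∃ r' ∈ K, ∀ᶠ b in r', ∀ P ∈ Ps, P w + b ∈ S := by
  have := continuousConstVAdd_ultrafilter (M := Z)
  obtain ⟨L, hLK, hL, ⟨r, hr⟩, hmin⟩ := exists_isMinimal_subAddAction hK hne hinv
  have : CompactSpace L := isCompact_iff_compactSpace.1 hL.isCompact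
  refine ⟨r, hLK hr, fun S hS => ?_⟩
  filter_upwards [isRecurrent_of_isPolyMap hq hPs {r : L | S ∈ (r : Ultrafilter Z)}
    ((ultrafilter_isOpen_basic S).preimage continuous_subtype_val) ⟨⟨r, hr⟩, hS⟩]
    with w ⟨r', _, hr'⟩
  exact ⟨r', hLK r'.2, (Filter.eventually_all_finset Ps).2 hr'⟩

theorem exists_ultrafilter_nat_add_mem (hq : q + q = q) {Ps : Finset (G → ℤ)}
    (hPs : ∀ P ∈ Ps, ∃ d, IsPolyMap d P) :
    ∃ u : Ultrafilter ℕ, ∀ A ∈ u, ∀ᶠ w in q, ∃ b : ℕ, ∀ P ∈ Ps, ∀ v : ℕ, P w = v → b + v ∈ A := by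
  let K : Set (Ultrafilter ℤ) := {r | (r : Filter ℤ) ≤ Filter.atTop}
  have hK : IsClosed K := by
    simp only [K, Filter.atTop, le_iInf_iff, Filter.le_principal_iff, Set.ofPred_forall]
    exact isClosed_iInter fun n => ultrafilter_isClosed_basic (Set.Ici n)
  obtain ⟨r, -, hr⟩ := exists_ultrafilter_eventually_add_mem hq hK
    ⟨Ultrafilter.of Filter.atTop, Ultrafilter.of_le _⟩
    (fun c r hr => (Filter.tendsto_atTop_add_const_left _ c Filter.tendsto_id).mono_left hr) hPs
  refine ⟨r.map Int.toNat, fun A hA => ?_⟩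
  filter_upwards [hr _ hA] with w ⟨r', hr', hmem⟩
  obtain ⟨b, hb, hb0⟩ := (hmem.and (hr' (Filter.eventually_ge_atTop 0))).exists
  lift b to ℕ using hb0
  refine ⟨b, fun P hP v hv => ?_⟩
  have hbv := hb P hP
  rw [hv, add_comm, ← Nat.cast_add] at hbv
  exact hbv

end TranslatedUltrafilters

section RichUltrafilters

variable {M : Type*} {𝒱 : Set (Finset M)} {u : Ultrafilter M}

/-- The ultrafilter `u` is rich in the finite configurations `𝒱`: each member of `u` contains a
translate of one of them. -/
def IsRich [Add M] (𝒱 : Set (Finset M)) (u : Ultrafilter M) : Prop :=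
  ∀ A ∈ u, ∃ V ∈ 𝒱, ∃ a, ∀ v ∈ V, a + v ∈ A

theorem IsRich.add_left [AddSemigroup M] (hu : IsRich 𝒱 u) (w : Ultrafilter M) :
    IsRich 𝒱 (w + u) := fun A hA => by
  obtain ⟨x, hx⟩ := ((Ultrafilter.eventually_add w u (· ∈ A)).1 hA).exists
  obtain ⟨V, hV, a, ha⟩ := hu _ hx
  exact ⟨V, hV, x + a, fun v hv => add_assoc x a v ▸ ha v hv⟩

theorem IsRich.add_right [AddCommSemigroup M] (hu : IsRich 𝒱 u) (w : Ultrafilter M) :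
    IsRich 𝒱 (u + w) := fun A hA => by
  obtain ⟨V, hV, a, ha⟩ := hu _ ((Ultrafilter.eventually_add u w (· ∈ A)).1 hA)
  obtain ⟨y, hy⟩ := ((Filter.eventually_all_finset V).2 ha).exists
  exact ⟨V, hV, a + y, fun v hv => add_right_comm a v y ▸ hy v hv⟩

end RichUltrafilters

section PolynomialJSets

/-- `A` is a polynomial J-set: the analogue of `IsJSet` in which finitely many polynomials are
applied to the sums. -/
def IsPolyJSet (A : Set ℕ) : Prop :=
  ∀ F T : Finset (ℕ → ℕ), (∀ P ∈ T, IsPolyZeroConst P) →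
    ∃ (a : ℕ) (H : Finset ℕ), H.Nonempty ∧ ∀ f ∈ F, ∀ P ∈ T, a + P (∑ t ∈ H, f t) ∈ A

/-- The polynomial analogue of `MemJ`: every member of `p` is a polynomial J-set. -/
def MemPolyJ (p : Ultrafilter ℕ) : Prop := ∀ A ∈ p, IsPolyJSet A

theorem exists_isRich_polynomial_sums (F T : Finset (ℕ → ℕ)) (hT : ∀ P ∈ T, IsPolyZeroConst P) :
    ∃ u : Ultrafilter ℕ, IsRich {V | ∃ H : Finset ℕ, H.Nonempty ∧
      V = (F ×ˢ T).image fun z => z.2 (∑ t ∈ H, z.1 t)} u := by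
  classical
  choose! R hR0 hR using hT
  obtain ⟨q, hq, hsum⟩ := exists_idempotent_eventually_sum fun t (f : ℕ → ℕ) => (f t : ℤ)
  let S (z : (ℕ → ℕ) × (ℕ → ℕ)) (w : (ℕ → ℕ) → ℤ) : ℤ :=
    ((R z.2).map (Nat.castRingHom ℤ)).eval (w z.1)
  have hS : ∀ Q ∈ (F ×ˢ T).image S, ∃ d, IsPolyMap d Q := fun Q hQ => by
    obtain ⟨z, hz, rfl⟩ := Finset.mem_image.1 hQ
    exact ⟨_, isPolyMap_eval (Pi.evalAddMonoidHom (fun _ => ℤ) z.1)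
      (by simp [hR0 z.2 (Finset.mem_product.1 hz).2])⟩
  obtain ⟨u, hu⟩ := exists_ultrafilter_nat_add_mem hq hS
  refine ⟨u, fun A hA => ?_⟩
  obtain ⟨_, ⟨b, hb⟩, H, hH, rfl⟩ := ((hu A hA).and hsum).exists
  refine ⟨_, ⟨H, hH, rfl⟩, b, Finset.forall_mem_image.2 fun z hz => ?_⟩
  refine hb _ (Finset.mem_image_of_mem S hz) _ ?_
  rw [hR z.2 (Finset.mem_product.1 hz).2]
  simp only [S, Finset.sum_apply, ← Nat.cast_sum]
  exact Polynomial.eval_natCast_map (Nat.castRingHom ℤ) _ _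

theorem memPolyJ_of_isMinimalIdempotent {p : Ultrafilter ℕ} (hp : IsMinimalIdempotent p) :
    MemPolyJ p := fun A hA F T hT => by
  obtain ⟨u, hu⟩ := exists_isRich_polynomial_sums F T hT
  obtain ⟨_, ⟨H, hH, rfl⟩, a, ha⟩ := mem_of_minimal_idempotent (I := {u | IsRich _ u})
    Ultrafilter.continuous_add_left hp.1 hp.2 ⟨u, hu⟩ (fun w _ hv => hv.add_left w)
    (fun _ hv w => hv.add_right w) A hA
  exact ⟨a, H, hH, fun f hf P hP =>
    ha _ (Finset.mem_image_of_mem _ (Finset.mk_mem_product hf hP))⟩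

end PolynomialJSets

section PolynomialSteps

theorem IsPolyZeroConst.exists_difference {P : ℕ → ℕ} (hP : IsPolyZeroConst P) (s : ℕ) :
    ∃ Q, IsPolyZeroConst Q ∧ ∀ y, P (s + y) = P s + Q y := by
  obtain ⟨R, -, hR⟩ := hP
  let R' : Polynomial ℕ := R.comp (Polynomial.C s + Polynomial.X)
  have hR' (y : ℕ) : R'.eval y = R.eval (s + y) := by simp [R', Polynomial.eval_comp]
  refine ⟨fun y => (R'.divX * Polynomial.X).eval y, ⟨_, by simp, fun _ => rfl⟩, fun y => ?_⟩
  have h0 : R'.coeff 0 = R.eval s := by rw [Polynomial.coeff_zero_eq_eval_zero, hR', add_zero]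
  rw [hR, hR, ← hR', ← h0, add_comm, ← Polynomial.eval_C (x := y) (a := R'.coeff 0),
    ← Polynomial.eval_add, Polynomial.divX_mul_X_add]

theorem MemPolyJ.exists_polynomial_step {p : Ultrafilter ℕ} (hp : MemPolyJ p) {D : Set ℕ}
    (hD : D ∈ p) (F : Finset (ℕ → ℕ)) {T : Finset (ℕ → ℕ)} (hT : ∀ P ∈ T, IsPolyZeroConst P)
    (S : Finset ℕ) (N : ℕ) :
    ∃ (a : ℕ) (H : Finset ℕ), H.Nonempty ∧ (∀ t ∈ H, N < t) ∧
      ∀ s ∈ S, ∀ f ∈ F, ∀ P ∈ T, ∃ d ∈ D, a + P (s + ∑ t ∈ H, f t) = P s + d := by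
  classical
  choose! Q hQ hPQ using fun P hP => (hT P hP).exists_difference
  obtain ⟨a, H, hH, hmem⟩ := hp D hD (F.image fun f t => f (t + (N + 1)))
    ((S ×ˢ T).image fun z => Q z.2 z.1) (Finset.forall_mem_image.2 fun z hz =>
      hQ z.2 (Finset.mem_product.1 hz).2 z.1)
  refine ⟨a, H.map (addRightEmbedding (N + 1)), hH.map, ?_, fun s hs f hf P hP => ?_⟩
  · simp only [Finset.mem_map, addRightEmbedding_apply]
    rintro _ ⟨t, -, rfl⟩
    omega
  · refine ⟨_, hmem _ (Finset.mem_image_of_mem _ hf) _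
      (Finset.mem_image_of_mem _ (Finset.mk_mem_product hs hP)), ?_⟩
    rw [Finset.sum_map, hPQ P hP]
    exact Nat.add_left_comm _ _ _

end PolynomialSteps

section ChainSums

/-- For `φ F = (α F, H F)`, the pairs `(∑ α F, ∑ ∑ t ∈ H F, f t)` where `F` runs over the members
of a chain of sets with `K ⊆ F ⊂ G`, and `f ∈ F` may be chosen for each of them. -/
inductive ChainSum (φ : Finset (ℕ → ℕ) → ℕ × Finset ℕ) (K : Finset (ℕ → ℕ)) :
    Finset (ℕ → ℕ) → ℕ → ℕ → Prop
  | zero (G : Finset (ℕ → ℕ)) : ChainSum φ K G 0 0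
  | add {F G : Finset (ℕ → ℕ)} {f : ℕ → ℕ} {a s : ℕ} : K ⊆ F → F ⊂ G → f ∈ F → ChainSum φ K F a s →
      ChainSum φ K G (a + (φ F).1) (s + ∑ t ∈ (φ F).2, f t)

variable {φ ψ : Finset (ℕ → ℕ) → ℕ × Finset ℕ} {K G : Finset (ℕ → ℕ)} {a s : ℕ}

namespace ChainSum

theorem congr (h : ChainSum φ K G a s) (hφψ : ∀ F ⊂ G, φ F = ψ F) : ChainSum ψ K G a s := by
  induction h with
  | zero G => exact zero G
  | add hKF hFG hf _ ih =>
    rw [hφψ _ hFG]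
    exact add hKF hFG hf (ih fun F' hF' => hφψ F' (hF'.trans hFG))

theorem finite (φ : Finset (ℕ → ℕ) → ℕ × Finset ℕ) (K G : Finset (ℕ → ℕ)) :
    {z : ℕ × ℕ | ChainSum φ K G z.1 z.2}.Finite := by
  classical
  induction G using Finset.strongInduction with
  | H G ih =>
  have hfin : (⋃ F ∈ G.ssubsets, ⋃ f ∈ F, (fun z : ℕ × ℕ => (z.1 + (φ F).1,
      z.2 + ∑ t ∈ (φ F).2, f t)) '' {z | ChainSum φ K F z.1 z.2}).Finite :=
    G.ssubsets.finite_toSet.biUnion fun F hF =>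
      F.finite_toSet.biUnion fun f _ => (ih F (Finset.mem_ssubsets.1 hF)).image _
  refine (hfin.insert (0, 0)).subset ?_
  rintro ⟨a, s⟩ (_ | ⟨hKF, hFG, hf, h⟩)
  · exact .inl rfl
  · exact .inr (Set.mem_biUnion (Finset.mem_ssubsets.2 hFG) (Set.mem_biUnion hf ⟨(_, _), h, rfl⟩))

theorem eventually_all {Y : Type*} {l : Filter Y} {R : Finset (ℕ → ℕ) → ℕ → ℕ → Y → Prop}
    (h : ∀ K ⊆ G, ∀ a s, ChainSum φ K G a s → ∀ᶠ y in l, R K a s y) :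
    ∀ᶠ y in l, ∀ K ⊆ G, ∀ a s, ChainSum φ K G a s → R K a s y := by
  have hall : ∀ᶠ y in l, ∀ K ∈ G.powerset, ∀ z ∈ {z : ℕ × ℕ | ChainSum φ K G z.1 z.2},
      R K z.1 z.2 y :=
    (Filter.eventually_all_finset _).2 fun K hK =>
      (Filter.eventually_all_finite (finite φ K G)).2 fun z => h K (Finset.mem_powerset.1 hK) _ _
  exact hall.mono fun y hy K hK a s => hy K (Finset.mem_powerset.2 hK) (a, s)

theorem sum {G : ℕ → Finset (ℕ → ℕ)} (hG : StrictMono G) {f : ℕ → ℕ → ℕ} (hf : ∀ i, f i ∈ G i)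
    {β : Finset ℕ} (hK : ∀ i ∈ β, K ⊆ G i) {j : ℕ} (hj : ∀ i ∈ β, i < j) :
    ChainSum φ K (G j) (∑ i ∈ β, (φ (G i)).1) (∑ i ∈ β, ∑ t ∈ (φ (G i)).2, f i t) := by
  induction β using Finset.induction_on_max generalizing j with
  | empty => exact zero _
  | insert i β hlt ih =>
    have hi : i ∉ β := fun hi => (hlt i hi).false
    rw [Finset.sum_insert hi, Finset.sum_insert hi, add_comm (φ (G i)).1,
      add_comm (∑ t ∈ (φ (G i)).2, f i t)]
    rw [Finset.forall_mem_insert] at hK hj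
    exact add hK.1 (hG hj.1) (hf i) (ih hK.2 hlt)

end ChainSum

end ChainSums

section Blocks

theorem exists_forall_of_wellFounded {ι Y : Type*} [Inhabited Y] {r : ι → ι → Prop}
    (hr : WellFounded r) {Q : ι → (ι → Y) → Y → Prop}
    (hcongr : ∀ {i φ ψ y}, (∀ j, r j i → φ j = ψ j) → Q i φ y → Q i ψ y)
    (hex : ∀ i φ, ∃ y, Q i φ y) : ∃ φ : ι → Y, ∀ i, Q i φ (φ i) := by
  classical
  choose g hg using hex
  let extend (i : ι) (φ : ∀ j, r j i → Y) (j : ι) : Y := if h : r j i then φ j h else default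
  refine ⟨hr.fix fun i φ => g i (extend i φ), fun i => ?_⟩
  rw [hr.fix_eq]
  exact hcongr (fun j hj => by simp only [extend, dif_pos hj]) (hg i _)

variable {p : Ultrafilter ℕ} {T : Finset (ℕ → ℕ)} {C : Finset (ℕ → ℕ) → Set ℕ}
  {φ ψ : Finset (ℕ → ℕ) → ℕ × Finset ℕ} {G : Finset (ℕ → ℕ)} {z : ℕ × Finset ℕ}

/-- The pair `z` may be chosen as the value at `G` of the block system `φ`, given its values at
the proper subsets of `G`. -/
structure IsNextBlock (p : Ultrafilter ℕ) (T : Finset (ℕ → ℕ)) (C : Finset (ℕ → ℕ) → Set ℕ)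
    (G : Finset (ℕ → ℕ)) (φ : Finset (ℕ → ℕ) → ℕ × Finset ℕ) (z : ℕ × Finset ℕ) : Prop where
  nonempty : z.2.Nonempty
  lt : ∀ F ⊂ G, ∀ x ∈ (φ F).2, ∀ y ∈ z.2, x < y
  mem_starSet : ∀ K ⊆ G, ∀ a s, ChainSum φ K G a s →
    (∀ P ∈ T, ∀ᶠ y in p, a + P s + y ∈ starSet p (C K)) →
    ∀ f ∈ G, ∀ P ∈ T, a + z.1 + P (s + ∑ t ∈ z.2, f t) ∈ starSet p (C K)

theorem IsNextBlock.congr (hφψ : ∀ F ⊂ G, φ F = ψ F) (h : IsNextBlock p T C G φ z) :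
    IsNextBlock p T C G ψ z :=
  ⟨h.nonempty, fun F hF => hφψ F hF ▸ h.lt F hF, fun K hK a s has =>
    h.mem_starSet K hK a s (has.congr fun F hF => (hφψ F hF).symm)⟩

theorem exists_isNextBlock (hp : MemPolyJ p) (hT : ∀ P ∈ T, IsPolyZeroConst P)
    (C : Finset (ℕ → ℕ) → Set ℕ) (G : Finset (ℕ → ℕ)) (φ : Finset (ℕ → ℕ) → ℕ × Finset ℕ) :
    ∃ z, IsNextBlock p T C G φ z := by
  classical
  have hS : (⋃ K ∈ G.powerset, Prod.snd '' {z : ℕ × ℕ | ChainSum φ K G z.1 z.2}).Finite :=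
    G.powerset.finite_toSet.biUnion fun K _ => (ChainSum.finite φ K G).image _
  have hD : ∀ᶠ y in p, ∀ K ⊆ G, ∀ a s, ChainSum φ K G a s →
      (∀ P ∈ T, ∀ᶠ y in p, a + P s + y ∈ starSet p (C K)) →
      ∀ P ∈ T, a + P s + y ∈ starSet p (C K) :=
    ChainSum.eventually_all fun K _ a s _ =>
      Filter.eventually_imp_distrib_left.2 (Filter.eventually_all_finset T).2
  let N : ℕ := (G.ssubsets.biUnion fun F => (φ F).2).sup id
  obtain ⟨a, H, hH, hNH, hstep⟩ := hp.exists_polynomial_step hD G hT hS.toFinset N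
  refine ⟨(a, H), hH, fun F hF x hx y hy => ?_, fun K hK a' s has hlarge f hf P hP => ?_⟩
  · have hxN : x ≤ N := Finset.le_sup (f := id)
      (Finset.mem_biUnion.2 ⟨F, Finset.mem_ssubsets.2 hF, hx⟩)
    exact hxN.trans_lt (hNH y hy)
  · have hs : s ∈ hS.toFinset := hS.mem_toFinset.2
      (Set.mem_biUnion (Finset.mem_powerset.2 hK) ⟨(a', s), has, rfl⟩)
    obtain ⟨d, hd, hdeq⟩ := hstep s hs f hf P hP
    rw [add_assoc, hdeq, ← add_assoc]
    exact hd K hK a' s has hlarge P hP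

/-- A system of blocks `φ F = (α F, H F)`, with `H F` moving to the right as `F` grows, such that
sums along chains above `K` lie in `C K`. -/
structure IsBlockSystem (T : Finset (ℕ → ℕ)) (C : Finset (ℕ → ℕ) → Set ℕ)
    (φ : Finset (ℕ → ℕ) → ℕ × Finset ℕ) : Prop where
  nonempty : ∀ F, (φ F).2.Nonempty
  lt : ∀ F G, F ⊂ G → ∀ x ∈ (φ F).2, ∀ y ∈ (φ G).2, x < y
  mem : ∀ K F a s, ChainSum φ K F a s → K ⊆ F → ∀ f ∈ F, ∀ P ∈ T,
    a + (φ F).1 + P (s + ∑ t ∈ (φ F).2, f t) ∈ C K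

theorem exists_isBlockSystem (hp : p + p = p) (hJ : MemPolyJ p)
    (hT : ∀ P ∈ T, IsPolyZeroConst P) (hC : ∀ K, C K ∈ p) : ∃ φ, IsBlockSystem T C φ := by
  obtain ⟨φ, hφ⟩ := exists_forall_of_wellFounded (Q := IsNextBlock p T C) wellFounded_lt
    IsNextBlock.congr (exists_isNextBlock hJ hT C)
  have hlarge {K F a s} (h : ChainSum φ K F a s) :
      ∀ P ∈ T, ∀ᶠ y in p, a + P s + y ∈ starSet p (C K) := by
    induction h with
    | zero =>
      intro P hP
      obtain ⟨R, hR0, hR⟩ := hT P hP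
      have hP0 : P 0 = 0 := by rw [hR, ← Polynomial.coeff_zero_eq_eval_zero, hR0]
      filter_upwards [starSet_mem hp (hC K)] with y hy
      simpa only [hP0, zero_add] using hy
    | add hKF _ hf h ih => exact fun P hP =>
      eventually_add_mem_starSet hp ((hφ _).mem_starSet K hKF _ _ h ih _ hf P hP)
  exact ⟨φ, fun F => (hφ F).nonempty, fun F G => (hφ G).lt F, fun K F a s h hK f hf P hP =>
    ((hφ F).mem_starSet K hK a s h (hlarge h) f hf P hP).1⟩

/-- The expression `∑ i ∈ β, α (G i) + P (∑ i ∈ β, ∑ t ∈ H (G i), f i t)`, for blocks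
`φ F = (α F, H F)`. -/
def blockValue (φ : Finset (ℕ → ℕ) → ℕ × Finset ℕ) (G : ℕ → Finset (ℕ → ℕ)) (f : ℕ → ℕ → ℕ)
    (P : ℕ → ℕ) (β : Finset ℕ) : ℕ :=
  ∑ i ∈ β, (φ (G i)).1 + P (∑ i ∈ β, ∑ t ∈ (φ (G i)).2, f i t)

theorem IsBlockSystem.blockValue_mem (hφ : IsBlockSystem T C φ) {G : ℕ → Finset (ℕ → ℕ)}
    (hG : StrictMono G) {f : ℕ → ℕ → ℕ} (hf : ∀ i, f i ∈ G i) {P : ℕ → ℕ} (hP : P ∈ T)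
    {β : Finset ℕ} (hβ : β.Nonempty) {K : Finset (ℕ → ℕ)} (hK : ∀ i ∈ β, K ⊆ G i) :
    blockValue φ G f P β ∈ C K := by
  have hmax := β.max'_mem hβ
  have hsum := ChainSum.sum (φ := φ) hG hf
    (fun i hi => hK i (Finset.mem_of_mem_erase hi)) fun i => β.lt_max'_of_mem_erase_max' hβ
  rw [blockValue, ← Finset.sum_erase_add _ _ hmax, ← Finset.sum_erase_add _ _ hmax]
  exact hφ.mem K _ _ _ hsum (hK _ hmax) _ (hf _) P hP

end Blocks

section LinearCombinations

theorem exists_isBlockSystem_linComb {T : Finset (ℕ → ℕ)} (hT : ∀ P ∈ T, IsPolyZeroConst P) (m : ℕ)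
    (a : Fin m → ℕ) {p : Fin m → Ultrafilter ℕ} (hp : ∀ l, IdempotentUF (p l))
    (hJ : ∀ l, MemPolyJ (p l)) {B : Finset (ℕ → ℕ) → Set ℕ} (hB : ∀ K, B K ∈ linComb m a p) :
    ∃ φ : Fin m → Finset (ℕ → ℕ) → ℕ × Finset ℕ, (∀ l, ∃ C, IsBlockSystem T C (φ l)) ∧
      ∀ G : ℕ → Finset (ℕ → ℕ), StrictMono G → ∀ f : ℕ → ℕ → ℕ, (∀ i, f i ∈ G i) →
        ∀ P : Fin m → ℕ → ℕ, (∀ l, P l ∈ T) → ∀ β : Fin m → Finset ℕ, (∀ l, (β l).Nonempty) →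
        (∀ l l', l < l' → ∀ x ∈ β l, ∀ y ∈ β l', x < y) → ∀ k, (∀ l, ∀ i ∈ β l, k ≤ i) →
        ∑ l, a l * blockValue (φ l) G f (P l) (β l) ∈ B (G k) := by
  induction m generalizing B with
  | zero =>
    exact ⟨Fin.elim0, fun l => l.elim0, fun G _ f _ P _ β _ _ k _ => hB (G k)⟩
  | succ m ih =>
    let q := linComb m (fun l => a l.succ) fun l => p l.succ
    let C : Finset (ℕ → ℕ) → Set ℕ := fun K => {x | ∀ᶠ y in q, a 0 * x + y ∈ B K}
    obtain ⟨φ, hφ⟩ := exists_isBlockSystem (hp 0) (hJ 0) hT (C := C) hB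
    let B' : Finset (ℕ → ℕ) → Set ℕ := fun K' => {y | ∀ K ⊆ K', ∀ b s, ChainSum φ K K' b s →
      ∀ P ∈ T, b + P s ∈ C K → a 0 * (b + P s) + y ∈ B K}
    have hB' (K' : Finset (ℕ → ℕ)) : B' K' ∈ q := ChainSum.eventually_all fun K _ b s _ =>
      (Filter.eventually_all_finset T).2 fun P _ => Filter.eventually_imp_distrib_left.2 id
    obtain ⟨φ', hφ', hval⟩ := ih (fun l => a l.succ) (fun l => hp l.succ)
      (fun l => hJ l.succ) hB'
    refine ⟨Fin.cons φ φ', Fin.cases ⟨C, hφ⟩ hφ', ?_⟩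
    intro G hG f hf P hP β hβ hlt k hk
    have hmax := (β 0).max'_mem (hβ 0)
    let k' : ℕ := (β 0).max' (hβ 0) + 1
    have hk' : ∀ i ∈ β 0, i < k' := fun i hi => Nat.lt_succ_of_le ((β 0).le_max' i hi)
    have hkk' : k ≤ k' := (hk 0 _ hmax).trans (Nat.le_succ _)
    have hK : ∀ i ∈ β 0, G k ⊆ G i := fun i hi => hG.monotone (hk 0 i hi)
    have htail := hval G hG f hf (fun l => P l.succ) (fun l => hP l.succ) (fun l => β l.succ)
      (fun l => hβ l.succ) (fun l l' hll' => hlt _ _ (Fin.succ_lt_succ_iff.2 hll')) k'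
      fun l => hlt 0 l.succ l.succ_pos _ hmax
    rw [Fin.sum_univ_succ]
    exact htail (G k) (hG.monotone hkk') _ _ (ChainSum.sum hG hf hK hk') (P 0) (hP 0)
      (hφ.blockValue_mem hG hf (hP 0) (hβ 0) hK)

end LinearCombinations

theorem image_linear_comb_polynomial_CST_II_general {m : ℕ} {X : Type*} (h : ℕ → X)
    (a : Fin m → ℕ) {p : Fin m → Ultrafilter ℕ} (hp : ∀ l, IdempotentUF (p l))
    (hJ : ∀ l, MemPolyJ (p l)) {A : Set X} (hA : A ∈ (linComb m a p).map h)
    {T : Finset (ℕ → ℕ)} (hT : ∀ P ∈ T, IsPolyZeroConst P) :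
    ∃ (α : Fin m → Finset (ℕ → ℕ) → ℕ) (H : Fin m → Finset (ℕ → ℕ) → Finset ℕ),
      (∀ l F, (H l F).Nonempty) ∧ (∀ l F G, F ⊂ G → ∀ x ∈ H l F, ∀ y ∈ H l G, x < y) ∧
      ∀ G : ℕ → Finset (ℕ → ℕ), StrictMono G → ∀ f : ℕ → ℕ → ℕ, (∀ i, f i ∈ G i) →
        ∀ P : Fin m → ℕ → ℕ, (∀ l, P l ∈ T) → ∀ β : Fin m → Finset ℕ, (∀ l, (β l).Nonempty) →
        (∀ l l', l < l' → ∀ x ∈ β l, ∀ y ∈ β l', x < y) →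
        h (∑ l, a l * (∑ i ∈ β l, α l (G i) + P l (∑ i ∈ β l, ∑ t ∈ H l (G i), f i t))) ∈ A := by
  obtain ⟨φ, hφ, hval⟩ := exists_isBlockSystem_linComb hT m a hp hJ (B := fun _ => h ⁻¹' A)
    fun _ => hA
  choose C hC using hφ
  exact ⟨fun l F => (φ l F).1, fun l F => (φ l F).2, fun l => (hC l).nonempty,
    fun l => (hC l).lt, fun G hG f hf P hP β hβ hlt =>
      hval G hG f hf P hP β hβ hlt 0 fun _ _ _ => Nat.zero_le _⟩

/-- Polynomial-image extension of the linear-combination polynomial central sets theorem,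
several minimal idempotents. -/
theorem image_linear_comb_polynomial_CST_II (m : ℕ) (hm : 1 ≤ m)
    (h : ℕ → ℕ) (hh : IsPolyZeroConst h) (a : Fin m → ℕ)
    (p : Fin m → Ultrafilter ℕ) (hp : ∀ i, IsMinimalIdempotent (p i))
    (A : Set ℕ) (hA : A ∈ (linComb m a p).map h)
    (T : Finset (ℕ → ℕ)) (hT : T.Nonempty) (hTP : ∀ P ∈ T, IsPolyZeroConst P) :
    ∃ (α : Fin m → Finset (ℕ → ℕ) → ℕ) (H : Fin m → Finset (ℕ → ℕ) → Finset ℕ),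
      (∀ (l : Fin m) (F : Finset (ℕ → ℕ)), F.Nonempty → (H l F).Nonempty) ∧
      (∀ (l : Fin m) (F G : Finset (ℕ → ℕ)), F.Nonempty → F ⊂ G →
        ∀ x ∈ H l F, ∀ y ∈ H l G, x < y) ∧
      (∀ G : ℕ → Finset (ℕ → ℕ),
        (∀ i, (G i).Nonempty) → (∀ i j, i < j → G i ⊂ G j) →
        ∀ f : ℕ → ℕ → ℕ, (∀ i, f i ∈ G i) →
        ∀ P : Fin m → ℕ → ℕ, (∀ l, P l ∈ T) →
        ∀ β : Fin m → Finset ℕ,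
          (∀ l, (β l).Nonempty) →
          (∀ l l' : Fin m, l < l' → ∀ x ∈ β l, ∀ y ∈ β l', x < y) →
          h (∑ l : Fin m, a l * ((∑ i ∈ β l, α l (G i)) +
              P l (∑ i ∈ β l, ∑ t ∈ H l (G i), f i t))) ∈ A) := by
  obtain ⟨α, H, hne, hlt, hmem⟩ := image_linear_comb_polynomial_CST_II_general h a
    (fun l => (hp l).1) (fun l => memPolyJ_of_isMinimalIdempotent (hp l)) hA hTP
  exact ⟨α, H, fun l F _ => hne l F, fun l F G _ => hlt l F G,
    fun G _ hG => hmem G fun i j => hG i j⟩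

end MultiCST
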